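/- If an automorphism σ of a finite tree T permutes the vertices and edges, then σ fixes a vertex or fixes an edge (possibly swapping its endpoints). -/

import Mathlib

/-!
In the generality of Nowakowski and Rival's fixed edge theorem, let `f` be a self-map of a tree
without infinite paths that sends adjacent vertices to equal or adjacent ones. If `f` fixes no
vertex, let `w x` be the neighbour of `x` on the way to `f x`. Iterating `w` must backtrack
somewhere, since otherwise it would trace an infinite path; so `w u = v` and `w v = u` for some edge
`uv`. Removing this edge leaves `f u` on the side of `v` and `f v` on the side of `u`. As `f u` and
`f v` are equal or adjacent, they are joined by the edge `uv` itself, so `f` swaps `u` and `v`.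
-/

section

variable {V : Type*} {G : SimpleGraph V}

theorem exists_adj_reachable_deleteEdges {x y : V} (hxy : G.Reachable x y) (hne : x ≠ y) :
    ∃ w, G.Adj x w ∧ (G.deleteEdges {s(x, w)}).Reachable w y := by
  obtain ⟨p, hp⟩ := hxy.exists_isPath
  cases p with
  | nil => exact absurd rfl hne
  | @cons _ w _ hxw q =>
    have hx : x ∉ q.support := ((SimpleGraph.Walk.cons_isPath_iff hxw q).1 hp).2
    exact ⟨w, hxw, ⟨q.toDeleteEdge _ fun he => hx (q.fst_mem_support_of_mem_edges he)⟩⟩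

theorem exists_isPath_penultimate_eq_of_forall_ne (hG : G.IsAcyclic) {s : ℕ → V}
    (hadj : ∀ n, G.Adj (s n) (s (n + 1))) (hne : ∀ n, s (n + 2) ≠ s n) (m k : ℕ) :
    ∃ p : G.Walk (s m) (s (m + k + 1)), p.IsPath ∧ p.penultimate = s (m + k) := by
  induction k with
  | zero => exact ⟨(hadj m).toWalk, (SimpleGraph.Path.singleton (hadj m)).isPath, rfl⟩
  | succ k ih =>
    obtain ⟨p, hp, hpen⟩ := ih
    have hnew : s (m + k + 2) ∉ p.support := fun hmem =>
      hne (m + k) ((hG.eq_penultimate_of_adj_end hp (hadj _) hmem).trans hpen)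
    exact ⟨p.concat (hadj _), hp.concat hnew (hadj _), p.penultimate_concat (hadj _)⟩

theorem injective_of_forall_adj_of_forall_ne (hG : G.IsAcyclic) {s : ℕ → V}
    (hadj : ∀ n, G.Adj (s n) (s (n + 1))) (hne : ∀ n, s (n + 2) ≠ s n) :
    Function.Injective s := by
  refine .of_lt_imp_ne fun m n hmn heq => ?_
  obtain ⟨k, rfl⟩ := Nat.exists_eq_add_of_lt hmn
  obtain ⟨p, hp, hpen⟩ := exists_isPath_penultimate_eq_of_forall_ne hG hadj hne m k
  have hnil : p.Nil := hp.nil_iff_eq.2 heq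
  have hpen' : p.penultimate = s m := by
    rw [SimpleGraph.Walk.penultimate, SimpleGraph.Walk.length_eq_zero_iff.2 hnil, Nat.zero_sub,
      p.getVert_zero]
  exact (hadj (m + k)).ne (hpen.symm.trans (hpen'.trans heq))

theorem eq_and_eq_of_isBridge_of_reachable_deleteEdges {u v a b : V} (huv : G.IsBridge s(u, v))
    (hab : a = b ∨ G.Adj a b) (hva : (G.deleteEdges {s(u, v)}).Reachable v a)
    (hub : (G.deleteEdges {s(u, v)}).Reachable u b) :
    a = v ∧ b = u := by
  have hsep : ¬ (G.deleteEdges {s(u, v)}).Reachable u v := SimpleGraph.isBridge_iff.1 huv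
  have hsep' : ¬ (G.deleteEdges {s(u, v)}).Reachable b a := fun hba =>
    hsep ((hub.trans hba).trans hva.symm)
  have hadj : G.Adj b a := (hab.resolve_left fun h => hsep' (h ▸ .refl _)).symm
  have hedge : s(b, a) = s(u, v) := by
    by_contra hne
    exact hsep' (SimpleGraph.deleteEdges_adj.2 ⟨hadj, hne⟩).reachable
  rcases Sym2.eq_iff.1 hedge with ⟨hbu, hav⟩ | ⟨-, hau⟩
  · exact ⟨hav, hbu⟩
  · exact absurd (hau ▸ hva).symm hsep

end

theorem stmt15_general {V : Type*} (T : SimpleGraph V) (hT : T.IsTree)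
    (hray : ∀ s : ℕ → V, (∀ n, T.Adj (s n) (s (n + 1))) → ¬ Function.Injective s)
    (f : V → V) (hf : ∀ u v, T.Adj u v → f u = f v ∨ T.Adj (f u) (f v)) :
    (∃ x, f x = x) ∨ ∃ a b, T.Adj a b ∧ f a = b ∧ f b = a := by
  by_contra! ⟨hfix, hswap⟩
  choose w hadj hreach using fun x =>
    exists_adj_reachable_deleteEdges (hT.connected x (f x)) (hfix x).symm
  have hback : ∀ x, w (w x) ≠ x := fun x hx => by
    have hreach_w : (T.deleteEdges {s(x, w x)}).Reachable x (f (w x)) := by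
      simpa only [hx, Sym2.eq_swap] using hreach (w x)
    have hbridge := SimpleGraph.isAcyclic_iff_forall_adj_isBridge.1 hT.isAcyclic (hadj x)
    obtain ⟨hfx, hfw⟩ := eq_and_eq_of_isBridge_of_reachable_deleteEdges hbridge
      (hf _ _ (hadj x)) (hreach x) hreach_w
    exact hswap x (w x) (hadj x) hfx hfw
  obtain ⟨x⟩ := hT.connected.nonempty
  have horbit : ∀ n, T.Adj (w^[n] x) (w^[n + 1] x) := fun n => by
    rw [Function.iterate_succ_apply']
    exact hadj _
  refine hray _ horbit (injective_of_forall_adj_of_forall_ne hT.isAcyclic horbit fun n => ?_)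
  rw [Function.iterate_succ_apply', Function.iterate_succ_apply']
  exact hback _

/-- An automorphism σ of a finite tree fixes a vertex or fixes an edge
(possibly swapping its endpoints). -/
theorem stmt15 {V : Type*} [Fintype V] [Nonempty V] (T : SimpleGraph V)
    (hT : T.IsTree) (σ : T ≃g T) :
    (∃ x : V, σ x = x) ∨ ∃ a b : V, T.Adj a b ∧ σ a = b ∧ σ b = a :=
  stmt15_general T hT (fun s _ => not_injective_infinite_finite s) σ
    fun _ _ hadj => Or.inr (σ.map_adj_iff.2 hadj)
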